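/- The 12×12 integer matrix A_{3,III} with rows [2,-2,-11,-25,-37,-47,-50,-46,-37,-23,-11,-1], [-2,2,-1,-11,-23,-37,-46,-50,-47,-37,-25,-11], [-11,-1,2,-2,-11,-25,-37,-47,-50,-46,-37,-23], [-25,-11,-2,2,-1,-11,-23,-37,-46,-50,-47,-37], [-37,-23,-11,-1,2,-2,-11,-25,-37,-47,-50,-46], [-47,-37,-25,-11,-2,2,-1,-11,-23,-37,-46,-50], [-50,-46,-37,-23,-11,-1,2,-2,-11,-25,-37,-47], [-46,-50,-47,-37,-25,-11,-2,2,-1,-11,-23,-37], [-37,-47,-50,-46,-37,-23,-11,-1,2,-2,-11,-25], [-23,-37,-46,-50,-47,-37,-25,-11,-2,2,-1,-11], [-11,-25,-37,-47,-50,-46,-37,-23,-11,-1,2,-2], [-1,-11,-23,-37,-46,-50,-47,-37,-25,-11,-2,2] satisfies: (a) it is a symmetric generalized Cartan matrix (symmetric, all diagonal entries 2, all off-diagonal entries nonpositive); (b) it has rank 3 over ℚ; (c) the real quadratic form x ↦ xᵀAx on ℝ¹² is equivalent to the weighted sum of squares with weights (1,1,−1,0,…,0), i.e. A is hyperbolic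 of rank 3; (d) there exists c ∈ ℚ¹² with Ac = −(1,…,1)ᵀ and cᵀAc < 0 (a lattice Weyl vector of negative square). -/

import Mathlib

open Matrix

/-!
Up to isometry, the twelve simple roots are the Eisenstein integers `z = (a + b√-3) / 2` of norm
`13`, ordered by argument and lifted to height `1` in a Lorentzian space:
`Aᵢⱼ = tr (zᵢ z̄ⱼ) - 24 = (aᵢaⱼ + 3bᵢbⱼ) / 2 - 24`.
Hence `A` is the Gram matrix of vectors spanning a space of signature `(2, 1)`, which gives its
rank and its signature. Since `∑ zᵢ = 0`, all row sums of `A` are `-24 * 12 = -288`, so the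
Weyl vector is `(∑ αᵢ) / 288`.
-/

theorem rank_transpose_mul_mul_of_mul_eq_one {K k n : Type*} [CommSemiring K]
    [StrongRankCondition K] [Fintype k] [DecidableEq k] [Fintype n]
    {G : Matrix k n K} {R : Matrix n k K} (hGR : G * R = 1) (B : Matrix k k K) :
    (Gᵀ * B * G).rank = B.rank := by
  apply le_antisymm
  · exact (rank_mul_le_left _ _).trans (rank_mul_le_right _ _)
  · have recover : Rᵀ * (Gᵀ * B * G) * R = B := by
      calc Rᵀ * (Gᵀ * B * G) * R = (G * R)ᵀ * B * (G * R) := by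
            simp only [transpose_mul, Matrix.mul_assoc]
        _ = B := by rw [hGR, transpose_one, Matrix.one_mul, Matrix.mul_one]
    calc B.rank = (Rᵀ * (Gᵀ * B * G) * R).rank := by rw [recover]
      _ ≤ (Gᵀ * B * G).rank := (rank_mul_le_left _ _).trans (rank_mul_le_right _ _)

theorem linearIndependent_row_of_mul_eq_one {K k n : Type*} [CommRing K] [Finite k] [DecidableEq k]
    [Fintype n] {G : Matrix k n K} {R : Matrix n k K} (hGR : G * R = 1) :
    LinearIndependent K G.row := by
  have := Fintype.ofFinite k
  rw [← vecMul_injective_iff]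
  have left_inverse : Function.LeftInverse (· ᵥ* R) (· ᵥ* G) := fun v => by
    simp only [vecMul_vecMul, hGR, vecMul_one]
  exact left_inverse.injective

theorem exists_basis_comp_embedding_eq {K V k n : Type*} [DivisionRing K] [AddCommGroup V]
    [Module K V] [Finite n] {v : k → V} (hv : LinearIndependent K v) (e : k ↪ n)
    (b₀ : Module.Basis n K V) :
    ∃ b : Module.Basis n K V, ∀ i, b (e i) = v i := by
  classical
  let b := Module.Basis.sumExtend hv
  let σ := b.indexEquiv b₀
  have hσ : Function.Injective fun i => σ (Sum.inl i) := σ.injective.comp Sum.inl_injective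
  let τ : Equiv.Perm n :=
    ((Equiv.ofInjective _ hσ).symm.trans (Equiv.ofInjective e e.injective)).extendSubtype
  have hτ (i : k) : τ (σ (Sum.inl i)) = e i := by
    rw [Equiv.extendSubtype_apply_of_mem _ _ (Set.mem_range_self i)]
    simp
  refine ⟨b.reindex (σ.trans τ), fun i => ?_⟩
  have hb : b (Sum.inl i) = v i := by
    simp only [b, Module.Basis.sumExtend, Module.Basis.coe_reindex, Module.Basis.coe_extend]
    rfl
  simp [← hτ, hb]

theorem exists_isUnit_det_row_eq {K k n : Type*} [Field K] [Fintype n] [DecidableEq n]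
    {G : Matrix k n K} (hG : LinearIndependent K G.row) (e : k ↪ n) :
    ∃ U : Matrix n n K, IsUnit U.det ∧ ∀ i, U (e i) = G i := by
  obtain ⟨b, hb⟩ := exists_basis_comp_embedding_eq hG e (Pi.basisFun K n)
  refine ⟨of b, ?_, hb⟩
  rw [← isUnit_iff_isUnit_det, ← linearIndependent_rows_iff_isUnit]
  exact b.linearIndependent

section Congruence

variable {k n : Type*} [Fintype k] [DecidableEq k]

theorem transpose_mul_diagonal_mul_apply {R : Type*} [CommSemiring R] (G : Matrix k n R)
    (d : k → R) (a b : n) : (Gᵀ * diagonal d * G) a b = ∑ i, G i a * d i * G i b := by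
  rw [mul_apply]
  simp only [mul_diagonal, transpose_apply]

variable [Fintype n] [DecidableEq n]

theorem exists_transpose_mul_gram_mul_eq_diagonal {K : Type*} [Field K] {G : Matrix k n K}
    (hG : LinearIndependent K G.row) (e : k ↪ n) {c : k → K} {d : n → K}
    (hde : ∀ i, d (e i) = c i) (hd : ∀ j ∉ Set.range e, d j = 0) :
    ∃ P : Matrix n n K, IsUnit P.det ∧ Pᵀ * (Gᵀ * diagonal c * G) * P = diagonal d := by
  obtain ⟨U, hU, hUG⟩ := exists_isUnit_det_row_eq hG e
  have gram : Gᵀ * diagonal c * G = Uᵀ * diagonal d * U := by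
    ext a b
    rw [transpose_mul_diagonal_mul_apply, transpose_mul_diagonal_mul_apply]
    refine Fintype.sum_of_injective e e.injective _ _ (fun j hj => ?_) fun i => ?_
    · rw [hd j hj, mul_zero, zero_mul]
    · rw [hUG, hde]
  refine ⟨U⁻¹, isUnit_nonsing_inv_det U hU, ?_⟩
  calc U⁻¹ᵀ * (Gᵀ * diagonal c * G) * U⁻¹
      = (U * U⁻¹)ᵀ * diagonal d * (U * U⁻¹) := by
        rw [gram]; simp only [transpose_mul, Matrix.mul_assoc]
    _ = diagonal d := by
        rw [mul_nonsing_inv U hU, transpose_one, Matrix.one_mul, Matrix.mul_one]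

theorem exists_diagonal_mul_diagonal_mul_diagonal_eq_sign (d : n → ℝ) :
    ∃ s : n → ℝ, IsUnit (diagonal s).det ∧
      diagonal s * diagonal d * diagonal s = diagonal fun i => (SignType.sign (d i) : ℝ) := by
  have rescale (x : ℝ) : ∃ s : ℝ, s ≠ 0 ∧ s * x * s = SignType.sign x := by
    rcases eq_or_ne x 0 with rfl | hx
    · exact ⟨1, one_ne_zero, by simp⟩
    · have hpos : 0 < |x| := abs_pos.mpr hx
      refine ⟨(√|x|)⁻¹, inv_ne_zero (Real.sqrt_ne_zero'.mpr hpos), ?_⟩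
      calc (√|x|)⁻¹ * x * (√|x|)⁻¹ = x / (√|x| * √|x|) := by ring
        _ = SignType.sign x * |x| / |x| := by rw [Real.mul_self_sqrt hpos.le, sign_mul_abs]
        _ = SignType.sign x := mul_div_cancel_right₀ _ hpos.ne'
  choose s hs hsd using rescale
  refine ⟨s ∘ d, ?_, ?_⟩
  · rw [det_diagonal, isUnit_iff_ne_zero]
    exact Finset.prod_ne_zero_iff.mpr fun i _ => hs (d i)
  · simp only [diagonal_mul_diagonal, Function.comp_apply, hsd]

theorem exists_transpose_mul_gram_mul_eq_diagonal_sign {G : Matrix k n ℝ}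
    (hG : LinearIndependent ℝ G.row) (e : k ↪ n) {c : k → ℝ} {d : n → ℝ}
    (hde : ∀ i, d (e i) = c i) (hd : ∀ j ∉ Set.range e, d j = 0) :
    ∃ P : Matrix n n ℝ, IsUnit P.det ∧ Pᵀ * (Gᵀ * diagonal c * G) * P =
      diagonal fun i => (SignType.sign (d i) : ℝ) := by
  obtain ⟨P, hP, hPd⟩ := exists_transpose_mul_gram_mul_eq_diagonal hG e hde hd
  obtain ⟨s, hs, hsd⟩ := exists_diagonal_mul_diagonal_mul_diagonal_eq_sign d
  refine ⟨P * diagonal s, det_mul P _ ▸ hP.mul hs, ?_⟩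
  rw [← hsd, ← hPd, transpose_mul, diagonal_transpose]
  simp only [Matrix.mul_assoc]

end Congruence

theorem exists_mulVec_eq_neg_one_of_row_sum_neg {n K : Type*} [Fintype n] [Nonempty n] [Field K]
    [LinearOrder K] [IsStrictOrderedRing K] {A : Matrix n n K} {s : K} (hs : s < 0)
    (hA : ∀ i, ∑ j, A i j = s) :
    ∃ c : n → K, (∀ i, (A *ᵥ c) i = -1) ∧ c ⬝ᵥ A *ᵥ c < 0 := by
  have weyl (i : n) : (A *ᵥ fun _ => -s⁻¹) i = -1 := by
    rw [mulVec, dotProduct, ← Finset.sum_mul, hA, mul_neg, mul_inv_cancel₀ hs.ne]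
  refine ⟨fun _ => -s⁻¹, weyl, Finset.sum_neg (fun i _ => ?_) Finset.univ_nonempty⟩
  rw [weyl, neg_mul_neg, mul_one]
  exact inv_lt_zero.mpr hs

/-- The simple roots of `A_{3,III}` as columns `(a, b, 1)`, where `(a + b√-3) / 2` runs
counterclockwise through the twelve Eisenstein integers of norm `13`, i.e. `a² + 3b² = 52`. -/
def simpleRoots : Matrix (Fin 3) (Fin 12) ℤ :=
  !![7, 5, 2, -2, -5, -7, -7, -5, -2,  2,  5,  7;
     1, 3, 4,  4,  3,  1, -1, -3, -4, -4, -3, -1;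
     1, 1, 1,  1,  1,  1,  1,  1,  1,  1,  1,  1]

/-- The quadratic form `a² + 3b² - 48h²`, twice the invariant form on the root lattice; the factor
`2` makes it integral in these coordinates. -/
def rootForm : Matrix (Fin 3) (Fin 3) ℤ := diagonal ![1, 3, -48]

theorem simpleRoots_mul_transpose :
    simpleRoots * simpleRootsᵀ = (diagonal ![312, 104, 12] : Matrix (Fin 3) (Fin 3) ℤ) := by
  decide +kernel

theorem simpleRoots_gram_nonpos_of_ne : ∀ i j, i ≠ j →
    (simpleRootsᵀ * rootForm * simpleRoots) i j ≤ 0 := by decide +kernel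

theorem exists_map_simpleRoots_mul_eq_one (K : Type*) [Field K] [CharZero K] :
    ∃ R : Matrix (Fin 12) (Fin 3) K, simpleRoots.map (Int.cast : ℤ → K) * R = 1 := by
  let G := simpleRoots.map (Int.cast : ℤ → K)
  have orthogonal_rows : G * Gᵀ = diagonal fun i => ((![312, 104, 12] i : ℤ) : K) := by
    have key := congrArg (·.map (Int.castRingHom K)) simpleRoots_mul_transpose
    simp only [Matrix.map_mul, diagonal_map (map_zero (Int.castRingHom K))] at key
    exact key
  let w : Fin 3 → K := ![1 / 312, 1 / 104, 1 / 12]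
  refine ⟨Gᵀ * diagonal w, ?_⟩
  change G * (Gᵀ * diagonal w) = 1
  rw [← Matrix.mul_assoc, orthogonal_rows, diagonal_mul_diagonal, ← diagonal_one]
  congr 1
  ext i
  fin_cases i <;> simp [w]

section SimpleRoots

variable {A : Matrix (Fin 12) (Fin 12) ℤ} (hA : 2 • A = simpleRootsᵀ * rootForm * simpleRoots)
include hA

theorem apply_nonpos_of_two_smul_eq_gram {i j : Fin 12} (hij : i ≠ j) : A i j ≤ 0 := by
  have two_mul_nonpos : 2 * A i j ≤ 0 := by
    simpa [← hA] using simpleRoots_gram_nonpos_of_ne i j hij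
  linarith

theorem map_eq_gram_of_two_smul_eq_gram (K : Type*) [Field K] [CharZero K] :
    A.map (Int.cast : ℤ → K) = (simpleRoots.map (Int.cast : ℤ → K))ᵀ *
      (diagonal ![1 / 2, 3 / 2, -24] : Matrix (Fin 3) (Fin 3) K) *
        simpleRoots.map (Int.cast : ℤ → K) := by
  ext i j
  have two_mul_apply : 2 * A i j = simpleRoots 0 i * simpleRoots 0 j +
      3 * (simpleRoots 1 i * simpleRoots 1 j) - 48 * (simpleRoots 2 i * simpleRoots 2 j) := by
    have key := congrFun₂ hA i j
    rw [rootForm, transpose_mul_diagonal_mul_apply, Fin.sum_univ_three] at key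
    simp only [Matrix.smul_apply, nsmul_eq_mul, cons_val] at key
    push_cast at key
    linear_combination key
  have two_mul_cast := congrArg (Int.cast : ℤ → K) two_mul_apply
  push_cast at two_mul_cast
  rw [transpose_mul_diagonal_mul_apply, Fin.sum_univ_three]
  simp only [map_apply, cons_val]
  linear_combination two_mul_cast / 2

theorem rank_map_eq_three_of_two_smul_eq_gram (K : Type*) [Field K] [CharZero K] :
    (A.map (Int.cast : ℤ → K)).rank = 3 := by
  obtain ⟨R, hR⟩ := exists_map_simpleRoots_mul_eq_one K
  have form_det_ne_zero : (diagonal ![1 / 2, 3 / 2, -24] : Matrix (Fin 3) (Fin 3) K).det ≠ 0 := by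
    simp [det_diagonal, Fin.prod_univ_three]
  rw [map_eq_gram_of_two_smul_eq_gram hA, rank_transpose_mul_mul_of_mul_eq_one hR,
    rank_of_det_ne_zero form_det_ne_zero, Fintype.card_fin]

theorem exists_congr_signature_of_two_smul_eq_gram :
    ∃ P : Matrix (Fin 12) (Fin 12) ℝ, IsUnit P.det ∧ Pᵀ * A.map (Int.cast : ℤ → ℝ) * P =
      diagonal ![1, 1, -1, 0, 0, 0, 0, 0, 0, 0, 0, 0] := by
  obtain ⟨R, hR⟩ := exists_map_simpleRoots_mul_eq_one ℝ
  have hG := linearIndependent_row_of_mul_eq_one hR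
  let e : Fin 3 ↪ Fin 12 := Fin.castLEEmb (by decide)
  let d : Fin 12 → ℝ := ![1 / 2, 3 / 2, -24, 0, 0, 0, 0, 0, 0, 0, 0, 0]
  have hde (i : Fin 3) : d (e i) = ![1 / 2, 3 / 2, -24] i := by fin_cases i <;> rfl
  have hd (j : Fin 12) (hj : j ∉ Set.range e) : d j = 0 := by
    fin_cases j <;> simp [e, d] at hj ⊢
  have hsign : (fun i => (SignType.sign (d i) : ℝ)) = ![1, 1, -1, 0, 0, 0, 0, 0, 0, 0, 0, 0] := by
    ext i
    fin_cases i <;> simp [d]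
  rw [map_eq_gram_of_two_smul_eq_gram hA, ← hsign]
  exact exists_transpose_mul_gram_mul_eq_diagonal_sign hG e hde hd

end SimpleRoots

/-- The matrix `A_{3,III}` from Nikulin's list of all twelve symmetric hyperbolic
generalized Cartan matrices of rank 3 with finite-volume fundamental chamber and
lattice Weyl vector of negative square:
(a) it is a symmetric generalized Cartan matrix;
(b) it has rank 3 over ℚ;
(c) the real quadratic form x ↦ xᵀAx is equivalent to the weighted sum of squares with
    weights (1,1,-1,0,…,0), i.e. A is hyperbolic of rank 3;
(d) it has a lattice Weyl vector of negative square: there is c ∈ ℚ^12 with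
    Ac = -(1,…,1)ᵀ and cᵀAc < 0. -/
theorem stmt_11 :
    let A : Matrix (Fin 12) (Fin 12) ℤ :=
      !![2, -2, -11, -25, -37, -47, -50, -46, -37, -23, -11, -1;
        -2, 2, -1, -11, -23, -37, -46, -50, -47, -37, -25, -11;
        -11, -1, 2, -2, -11, -25, -37, -47, -50, -46, -37, -23;
        -25, -11, -2, 2, -1, -11, -23, -37, -46, -50, -47, -37;
        -37, -23, -11, -1, 2, -2, -11, -25, -37, -47, -50, -46;
        -47, -37, -25, -11, -2, 2, -1, -11, -23, -37, -46, -50;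
        -50, -46, -37, -23, -11, -1, 2, -2, -11, -25, -37, -47;
        -46, -50, -47, -37, -25, -11, -2, 2, -1, -11, -23, -37;
        -37, -47, -50, -46, -37, -23, -11, -1, 2, -2, -11, -25;
        -23, -37, -46, -50, -47, -37, -25, -11, -2, 2, -1, -11;
        -11, -25, -37, -47, -50, -46, -37, -23, -11, -1, 2, -2;
        -1, -11, -23, -37, -46, -50, -47, -37, -25, -11, -2, 2]
    -- (a) symmetric generalized Cartan matrix
    (Aᵀ = A ∧ (∀ i, A i i = 2) ∧ (∀ i j, i ≠ j → A i j ≤ 0)) ∧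
    -- (b) rank 3 over ℚ
    (A.map ((↑·) : ℤ → ℚ)).rank = 3 ∧
    -- (c) hyperbolic of rank 3: x ↦ xᵀAx over ℝ is equivalent to the weighted
    -- sum of squares with weights (1,1,-1,0,…,0)
    (∃ P : Matrix (Fin 12) (Fin 12) ℝ, IsUnit P.det ∧
      Pᵀ * A.map ((↑·) : ℤ → ℝ) * P = Matrix.diagonal ![(1:ℝ),1,-1,0,0,0,0,0,0,0,0,0]) ∧
    -- (d) lattice Weyl vector of negative square
    (∃ c : Fin 12 → ℚ, (∀ i, (A.map ((↑·) : ℤ → ℚ)).mulVec c i = -1) ∧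
      c ⬝ᵥ (A.map ((↑·) : ℤ → ℚ)).mulVec c < 0) := by
  intro A
  have gram : 2 • A = simpleRootsᵀ * rootForm * simpleRoots := by decide +kernel
  have row_sum : ∀ i, ∑ j, A i j = -288 := by decide +kernel
  refine ⟨⟨by decide +kernel, by decide +kernel,
      fun _ _ => apply_nonpos_of_two_smul_eq_gram gram⟩,
    rank_map_eq_three_of_two_smul_eq_gram gram ℚ,
    exists_congr_signature_of_two_smul_eq_gram gram,
    exists_mulVec_eq_neg_one_of_row_sum_neg (s := -288) (by norm_num) fun i => ?_⟩
  simp only [map_apply]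
  exact_mod_cast row_sum i
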